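/- Let X be a real random variable whose distribution is unimodal with mode 0, and let τ² = E[X²] with τ > 0. Then for every k ≥ 2τ/√3, the probability that |X| ≥ k is at most 4τ²/(9k²); and for every k with 0 ≤ k < 2τ/√3, the probability that |X| ≥ k is at most 1 - k/(τ√3). (Gauss's inequality.) -/

import Mathlib

open MeasureTheory

/-- A probability measure on `ℝ` is unimodal with mode `m` if it is absolutely continuous with
respect to Lebesgue measure with a density that is nondecreasing on `(-∞, m]` and nonincreasing
on `[m, ∞)`. -/
def IsUnimodalWithMode (P : Measure ℝ) (m : ℝ) : Prop :=
  ∃ f : ℝ → ENNReal, P = volume.withDensity f ∧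
    MonotoneOn f (Set.Iic m) ∧ AntitoneOn f (Set.Ici m)

/-!
Folding the law of `X` about its mode gives `|X - m|` the nonincreasing density
`g t = f (m + t) + f (m - t)` on `(0, ∞)`. For such a `g` and a weight `u ≥ 0`,
`∫_{t ≥ k} g ≤ ∫ u g` holds as soon as `∫ (1 - u)⁺ ≤ k`: the deficit `1 - u` on `[k, ∞)` is then at
most the mass of `u` on `(0, k)`, and `g ≤ g k` on the former while `g k ≤ g` on the latter.

The weight `u t = 1 - c (1 - (t / T) ^ 2)` has deficit `2 c T / 3`. Gauss's two bounds are the cases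
`c = 1`, `T = 3 k / 2`, and `T = τ √3`, `c = 3 k / (2 T)`, the latter being admissible when `c ≤ 1`.
-/

section

open Set
open scoped ENNReal

section Comparison

variable {α : Type*} [MeasurableSpace α] {μ : Measure α} {s : Set α} {g u : α → ℝ≥0∞}

lemma setLIntegral_sdiff_one_sub_le_setLIntegral_inter {t : Set α} (ht : MeasurableSet t)
    (hu : Measurable u) (hst : μ (s ∩ t) ≠ ∞) (hdef : ∫⁻ x in s, (1 - u x) ∂μ ≤ μ (s ∩ t)) :
    ∫⁻ x in s \ t, (1 - u x) ∂μ ≤ ∫⁻ x in s ∩ t, u x ∂μ := by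
  have hfin : ∫⁻ x in s ∩ t, (1 - u x) ∂μ ≠ ∞ := by
    refine ne_top_of_le_ne_top hst ?_
    calc ∫⁻ x in s ∩ t, (1 - u x) ∂μ ≤ ∫⁻ _ in s ∩ t, 1 ∂μ := lintegral_mono fun _ => tsub_le_self
      _ = μ (s ∩ t) := setLIntegral_one _
  refine ENNReal.le_of_add_le_add_left hfin ?_
  calc ∫⁻ x in s ∩ t, (1 - u x) ∂μ + ∫⁻ x in s \ t, (1 - u x) ∂μ
      = ∫⁻ x in s, (1 - u x) ∂μ := lintegral_inter_add_sdiff _ _ ht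
    _ ≤ ∫⁻ _ in s ∩ t, 1 ∂μ := by rwa [setLIntegral_one]
    _ ≤ ∫⁻ x in s ∩ t, ((1 - u x) + u x) ∂μ := lintegral_mono fun _ => le_tsub_add
    _ = ∫⁻ x in s ∩ t, (1 - u x) ∂μ + ∫⁻ x in s ∩ t, u x ∂μ := lintegral_add_right _ hu

variable [LinearOrder α] [TopologicalSpace α] [OrderClosedTopology α] {k : α}

lemma setLIntegral_inter_Ici_mul_le_setLIntegral_inter_Iio_mul [OpensMeasurableSpace α]
    {w : α → ℝ≥0∞} (hs : MeasurableSet s) (hk : k ∈ s) (hg : AntitoneOn g s) (hw : Measurable w)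
    (hu : Measurable u) (hwu : ∫⁻ x in s ∩ Ici k, w x ∂μ ≤ ∫⁻ x in s ∩ Iio k, u x ∂μ) :
    ∫⁻ x in s ∩ Ici k, w x * g x ∂μ ≤ ∫⁻ x in s ∩ Iio k, u x * g x ∂μ :=
  calc ∫⁻ x in s ∩ Ici k, w x * g x ∂μ
      ≤ ∫⁻ x in s ∩ Ici k, w x * g k ∂μ :=
        setLIntegral_mono' (hs.inter measurableSet_Ici) fun x hx =>
          mul_le_mul_right (hg hk hx.1 hx.2) (w x)
    _ = (∫⁻ x in s ∩ Ici k, w x ∂μ) * g k := lintegral_mul_const _ hw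
    _ ≤ (∫⁻ x in s ∩ Iio k, u x ∂μ) * g k := mul_le_mul_left hwu (g k)
    _ = ∫⁻ x in s ∩ Iio k, u x * g k ∂μ := (lintegral_mul_const _ hu).symm
    _ ≤ ∫⁻ x in s ∩ Iio k, u x * g x ∂μ :=
        setLIntegral_mono' (hs.inter measurableSet_Iio) fun x hx =>
          mul_le_mul_right (hg hx.1 hk hx.2.le) (u x)

lemma setLIntegral_inter_Ici_le_setLIntegral_mul_of_antitoneOn [BorelSpace α]
    (hs : MeasurableSet s) (hk : k ∈ s) (hg : AntitoneOn g s) (hu : Measurable u)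
    (hsk : μ (s ∩ Iio k) ≠ ∞) (hdef : ∫⁻ x in s, (1 - u x) ∂μ ≤ μ (s ∩ Iio k)) :
    ∫⁻ x in s ∩ Ici k, g x ∂μ ≤ ∫⁻ x in s, u x * g x ∂μ := by
  have hsdiff : s \ Iio k = s ∩ Ici k := by rw [sdiff_eq, compl_Iio]
  have hgm : AEMeasurable g (μ.restrict (s ∩ Ici k)) :=
    (aemeasurable_restrict_of_antitoneOn hs hg).mono_set inter_subset_left
  have deficit_le : ∫⁻ x in s ∩ Ici k, (1 - u x) ∂μ ≤ ∫⁻ x in s ∩ Iio k, u x ∂μ :=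
    hsdiff ▸ setLIntegral_sdiff_one_sub_le_setLIntegral_inter measurableSet_Iio hu hsk hdef
  calc ∫⁻ x in s ∩ Ici k, g x ∂μ
      ≤ ∫⁻ x in s ∩ Ici k, ((1 - u x) * g x + u x * g x) ∂μ :=
        lintegral_mono fun x => by
          rw [← add_mul]
          exact le_mul_of_one_le_left' le_tsub_add
    _ = ∫⁻ x in s ∩ Ici k, (1 - u x) * g x ∂μ + ∫⁻ x in s ∩ Ici k, u x * g x ∂μ :=
        lintegral_add_right' _ (hu.aemeasurable.mul hgm)
    _ ≤ ∫⁻ x in s ∩ Iio k, u x * g x ∂μ + ∫⁻ x in s ∩ Ici k, u x * g x ∂μ := by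
        gcongr ?_ + _
        exact setLIntegral_inter_Ici_mul_le_setLIntegral_inter_Iio_mul hs hk hg (by fun_prop) hu
          deficit_le
    _ = ∫⁻ x in s, u x * g x ∂μ := by
        rw [← hsdiff, lintegral_inter_add_sdiff _ _ measurableSet_Iio]

end Comparison

lemma lintegral_eq_setLIntegral_Ioi_comp_add_add_comp_sub (F : ℝ → ℝ≥0∞) (m : ℝ) :
    ∫⁻ x, F x = (∫⁻ t in Ioi 0, F (m + t)) + ∫⁻ t in Ioi 0, F (m - t) := by
  have right_half : ∫⁻ t in Ioi 0, F (m + t) = ∫⁻ x in Ioi m, F x := by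
    simpa using (measurePreserving_add_left volume m).setLIntegral_comp_preimage_emb
      (measurableEmbedding_addLeft m) F (Ioi m)
  have left_half : ∫⁻ t in Ioi 0, F (m - t) = ∫⁻ x in Iic m, F x := by
    rw [← setLIntegral_congr Iio_ae_eq_Iic]
    simpa using (volume.measurePreserving_sub_left m).setLIntegral_comp_preimage_emb
      (measurableEmbedding_subLeft m) F (Iio m)
  rw [right_half, left_half, ← compl_Ioi, lintegral_add_compl _ measurableSet_Ioi]

lemma lintegral_withDensity_comp_abs_sub {f φ : ℝ → ℝ≥0∞} (hf : AEMeasurable f)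
    (hφ : Measurable φ) (m : ℝ) :
    ∫⁻ x, φ |x - m| ∂(volume.withDensity f) =
      ∫⁻ t in Ioi 0, φ t * (f (m + t) + f (m - t)) := by
  have hfm : AEMeasurable (fun t => f (m + t)) :=
    hf.comp_quasiMeasurePreserving (measurePreserving_add_left volume m).quasiMeasurePreserving
  calc ∫⁻ x, φ |x - m| ∂(volume.withDensity f)
      = ∫⁻ x, f x * φ |x - m| := lintegral_withDensity_eq_lintegral_mul₀ hf (by fun_prop)
    _ = (∫⁻ t in Ioi 0, f (m + t) * φ |m + t - m|) + ∫⁻ t in Ioi 0, f (m - t) * φ |m - t - m| :=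
        lintegral_eq_setLIntegral_Ioi_comp_add_add_comp_sub _ m
    _ = (∫⁻ t in Ioi 0, φ t * f (m + t)) + ∫⁻ t in Ioi 0, φ t * f (m - t) := by
        congr 1 <;> refine setLIntegral_congr_fun measurableSet_Ioi fun t (ht : 0 < t) => ?_ <;>
          simp [abs_of_pos ht, mul_comm]
    _ = ∫⁻ t in Ioi 0, φ t * (f (m + t) + f (m - t)) := by
        simp_rw [mul_add]
        exact (lintegral_add_left' (hφ.aemeasurable.mul hfm.restrict) _).symm

lemma setLIntegral_Ioi_ofReal_mul_one_sub_div_sq {c T : ℝ} (hc : 0 ≤ c) (hT : 0 < T) :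
    ∫⁻ t in Ioi 0, ENNReal.ofReal (c * (1 - (t / T) ^ 2)) = ENNReal.ofReal (2 * c * T / 3) := by
  have vanishes : ∀ t ∈ Ioi T, ENNReal.ofReal (c * (1 - (t / T) ^ 2)) = 0 := fun t ht => by
    have : 1 ≤ (t / T) ^ 2 := one_le_pow₀ ((one_le_div hT).2 (le_of_lt ht))
    exact ENNReal.ofReal_of_nonpos (mul_nonpos_of_nonneg_of_nonpos hc (by linarith))
  have nonneg : ∀ t ∈ Ioc 0 T, 0 ≤ c * (1 - (t / T) ^ 2) := fun t ht => by
    have : (t / T) ^ 2 ≤ 1 := pow_le_one₀ (div_nonneg ht.1.le hT.le) ((div_le_one hT).2 ht.2)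
    exact mul_nonneg hc (by linarith)
  have hcont : Continuous fun t : ℝ => c * (1 - (t / T) ^ 2) := by fun_prop
  have integral_eq : ∫ t in 0..T, c * (1 - (t / T) ^ 2) = 2 * c * T / 3 := by
    rw [intervalIntegral.integral_const_mul,
      intervalIntegral.integral_comp_div (fun s => 1 - s ^ 2) hT.ne', zero_div, div_self hT.ne',
      intervalIntegral.integral_sub (by simp) (by simp)]
    norm_num
    ring
  rw [← Ioc_union_Ioi_eq_Ioi hT.le, lintegral_union measurableSet_Ioi (by simp),
    setLIntegral_congr_fun measurableSet_Ioi vanishes, lintegral_zero, add_zero,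
    ← ofReal_integral_eq_lintegral_ofReal
      (hcont.intervalIntegrable 0 T).1 (ae_restrict_of_forall_mem measurableSet_Ioc nonneg),
    ← intervalIntegral.integral_of_le hT.le, integral_eq]

lemma aemeasurable_of_monotoneOn_Iic_of_antitoneOn_Ici {α β : Type*}
    [MeasurableSpace α] [TopologicalSpace α] [BorelSpace α] [LinearOrder α] [OrderClosedTopology α]
    [MeasurableSpace β] [TopologicalSpace β] [BorelSpace β] [LinearOrder β] [OrderTopology β]
    [SecondCountableTopology β] {μ : Measure α} {f : α → β} {m : α}
    (hmono : MonotoneOn f (Iic m)) (hanti : AntitoneOn f (Ici m)) : AEMeasurable f μ := by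
  rw [← Measure.restrict_univ (μ := μ), ← Iic_union_Ici (a := m)]
  exact aemeasurable_union_iff.2 ⟨aemeasurable_restrict_of_monotoneOn measurableSet_Iic hmono,
    aemeasurable_restrict_of_antitoneOn measurableSet_Ici hanti⟩

lemma antitoneOn_comp_add_add_comp_sub {β : Type*} [AddCommMonoid β] [PartialOrder β]
    [IsOrderedAddMonoid β] {f : ℝ → β} {m : ℝ}
    (hmono : MonotoneOn f (Iic m)) (hanti : AntitoneOn f (Ici m)) :
    AntitoneOn (fun t => f (m + t) + f (m - t)) (Ici 0) := by
  intro t (ht : 0 ≤ t) t' (ht' : 0 ≤ t') htt'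
  exact add_le_add (hanti (by simpa) (by simpa) (by linarith))
    (hmono (by simpa) (by simpa) (by linarith))

variable {P : Measure ℝ} {m : ℝ}

theorem IsUnimodalWithMode.measure_le_abs_sub_le_lintegral (hU : IsUnimodalWithMode P m)
    {k : ℝ} (hk : 0 < k) {u : ℝ → ℝ≥0∞} (hu : Measurable u)
    (hdef : ∫⁻ t in Ioi 0, (1 - u t) ≤ ENNReal.ofReal k) :
    P {x | k ≤ |x - m|} ≤ ∫⁻ x, u |x - m| ∂P := by
  obtain ⟨f, rfl, hmono, hanti⟩ := hU
  have hf : AEMeasurable f := aemeasurable_of_monotoneOn_Iic_of_antitoneOn_Ici hmono hanti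
  have hg : AntitoneOn (fun t => f (m + t) + f (m - t)) (Ioi 0) :=
    (antitoneOn_comp_add_add_comp_sub hmono hanti).mono Ioi_subset_Ici_self
  have hvol : volume (Ioi 0 ∩ Iio k) = ENNReal.ofReal k := by
    rw [Ioi_inter_Iio, Real.volume_Ioo, sub_zero]
  calc volume.withDensity f {x | k ≤ |x - m|}
      = ∫⁻ x, (Ici k).indicator 1 |x - m| ∂(volume.withDensity f) :=
        (lintegral_indicator_one (measurableSet_le (by fun_prop) (by fun_prop))).symm
    _ = ∫⁻ t in Ioi 0, (Ici k).indicator 1 t * (f (m + t) + f (m - t)) :=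
        lintegral_withDensity_comp_abs_sub hf (measurable_one.indicator measurableSet_Ici) m
    _ = ∫⁻ t in Ioi 0 ∩ Ici k, (f (m + t) + f (m - t)) := by
        rw [inter_comm, ← setLIntegral_indicator measurableSet_Ici]
        simp only [indicator_apply, Pi.one_apply, ite_mul, one_mul, zero_mul]
    _ ≤ ∫⁻ t in Ioi 0, u t * (f (m + t) + f (m - t)) :=
        setLIntegral_inter_Ici_le_setLIntegral_mul_of_antitoneOn measurableSet_Ioi hk hg hu
          (hvol ▸ ENNReal.ofReal_ne_top) (hvol ▸ hdef)
    _ = ∫⁻ x, u |x - m| ∂(volume.withDensity f) :=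
        (lintegral_withDensity_comp_abs_sub hf hu m).symm

theorem IsUnimodalWithMode.measureReal_le_abs_sub_le [IsProbabilityMeasure P]
    (hU : IsUnimodalWithMode P m) (hInt : Integrable (fun x => (x - m) ^ 2) P)
    {k c T : ℝ} (hk : 0 < k) (hc : 0 ≤ c) (hc' : c ≤ 1) (hT : 0 < T) (hcT : 2 * c * T ≤ 3 * k) :
    P.real {x | k ≤ |x - m|} ≤ 1 - c * (1 - (∫ x, (x - m) ^ 2 ∂P) / T ^ 2) := by
  set v : ℝ → ℝ := fun t => 1 - c * (1 - (t / T) ^ 2)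
  have v_nonneg : ∀ t, 0 ≤ v t := fun t => by
    have := mul_nonneg hc (sq_nonneg (t / T))
    simp only [v]
    linarith
  have deficit_le : ∫⁻ t in Ioi 0, (1 - ENNReal.ofReal (v t)) ≤ ENNReal.ofReal k := by
    simp_rw [← ENNReal.ofReal_one, ← ENNReal.ofReal_sub 1 (v_nonneg _), v, sub_sub_cancel]
    rw [setLIntegral_Ioi_ofReal_mul_one_sub_div_sq hc hT]
    exact ENNReal.ofReal_le_ofReal (by linarith)
  have v_abs : ∀ x, v |x - m| = (1 - c) + c / T ^ 2 * (x - m) ^ 2 := fun x => by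
    simp only [v, div_pow, sq_abs]
    ring
  have v_integrable : Integrable (fun x => v |x - m|) P := by
    simp_rw [v_abs]
    exact (integrable_const _).add (hInt.const_mul _)
  have v_integral : ∫ x, v |x - m| ∂P = 1 - c * (1 - (∫ x, (x - m) ^ 2 ∂P) / T ^ 2) := by
    simp_rw [v_abs]
    rw [integral_add (integrable_const _) (hInt.const_mul _), integral_const_mul, integral_const,
      probReal_univ, one_smul]
    ring
  rw [← v_integral]
  refine ENNReal.toReal_le_of_le_ofReal (integral_nonneg fun _ => v_nonneg _) ?_
  rw [ofReal_integral_eq_lintegral_ofReal v_integrable (.of_forall fun _ => v_nonneg _)]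
  exact hU.measure_le_abs_sub_le_lintegral hk (by fun_prop) deficit_le

theorem gauss_inequality_general [IsProbabilityMeasure P] (hU : IsUnimodalWithMode P m)
    (hInt : Integrable (fun x => (x - m) ^ 2) P) {τ : ℝ} (hτ : 0 < τ)
    (hτ2 : τ ^ 2 = ∫ x, (x - m) ^ 2 ∂P) :
    (∀ k : ℝ, 0 < k → P.real {x | k ≤ |x - m|} ≤ 4 * τ ^ 2 / (9 * k ^ 2)) ∧
    (∀ k : ℝ, k ≤ 2 * τ / √3 → P.real {x | k ≤ |x - m|} ≤ 1 - k / (τ * √3)) := by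
  refine ⟨fun k hk => ?_, fun k hkτ => ?_⟩
  · have bound := hU.measureReal_le_abs_sub_le hInt (c := 1) (T := 3 / 2 * k) hk zero_le_one le_rfl
      (by positivity) (by linarith)
    rw [← hτ2] at bound
    convert bound using 1
    ring
  · have hT : 0 < τ * √3 := by positivity
    rcases le_or_gt k 0 with hk | hk
    · exact measureReal_le_one.trans (by linarith [div_nonpos_of_nonpos_of_nonneg hk hT.le])
    · have hkT : 3 * k ≤ 2 * (τ * √3) :=
        calc 3 * k = k * √3 * √3 := by
              rw [mul_assoc, Real.mul_self_sqrt (by norm_num), mul_comm]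
          _ ≤ 2 * τ * √3 := by gcongr ?_ * _; exact (le_div_iff₀ (by positivity)).1 hkτ
          _ = 2 * (τ * √3) := mul_assoc _ _ _
      have bound := hU.measureReal_le_abs_sub_le hInt (c := 3 * k / (2 * (τ * √3))) hk
        (by positivity) ((div_le_one (by positivity)).2 hkT) hT (le_of_eq (by field_simp))
      rw [← hτ2] at bound
      convert bound using 1
      rw [mul_pow, Real.sq_sqrt (by norm_num)]
      field_simp
      ring

end

/-- **Gauss's inequality.** If `X` is a real random variable (given by its law `P`) whose
distribution is unimodal with mode `0`, and `τ² = E[X²]` with `τ > 0`, then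
`P[|X| ≥ k] ≤ 4τ²/(9k²)` for `k ≥ 2τ/√3`, and `P[|X| ≥ k] ≤ 1 - k/(τ√3)` for
`0 ≤ k < 2τ/√3`. -/
theorem gauss_inequality
    (P : Measure ℝ) [IsProbabilityMeasure P]
    (hU : IsUnimodalWithMode P 0)
    (hInt : Integrable (fun x => x ^ 2) P)
    (τ : ℝ) (hτ : 0 < τ) (hτ2 : τ ^ 2 = ∫ x, x ^ 2 ∂P) :
    (∀ k : ℝ, 2 * τ / Real.sqrt 3 ≤ k →
      (P {x | k ≤ |x|}).toReal ≤ 4 * τ ^ 2 / (9 * k ^ 2)) ∧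
    (∀ k : ℝ, 0 ≤ k → k < 2 * τ / Real.sqrt 3 →
      (P {x | k ≤ |x|}).toReal ≤ 1 - k / (τ * Real.sqrt 3)) := by
  have key := gauss_inequality_general hU (by simpa using hInt) hτ (by simpa using hτ2)
  simp only [sub_zero] at key
  exact ⟨fun k hk => key.1 k (lt_of_lt_of_le (by positivity) hk), fun k _ hk => key.2 k hk.le⟩
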